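/- For random variables $X, Y$ with finite ranges on a probability space $(\Omega, \mu)$, let $H[X] = -\sum_x \mu(X = x)\log \mu(X = x)$ (natural logarithm, $0\log 0 = 0$), $H[X \mid Y] = H[\langle X, Y\rangle] - H[Y]$ and $I[X : Y] = H[X] + H[Y] - H[\langle X, Y\rangle]$ denote Shannon entropy, conditional entropy and mutual information. Let $(\Omega, \mu)$ be a probability space, let $\iota$ be a finite nonempty set and $G$ a finite additive abelian group, both with the discrete $\sigma$-algebra, and let $A : \iota \to G$ be a map. Let $I, \hat I : \Omega \to \iota$ and $Z : \Omega \to G$ be random variables such that $Z$ is independent of $I$, and define $\hat Z := A\circ I + Z - A\circ \hat I$. Then $$I[\hat Z : \langle I, \hat I\rangle] \;\le\; I[\langle Z, \hat Z\rangle : I] + H[\hat I \mid I] \;\le\; H[\hat Z \mid Z] + H[\hat I \mid I].$$ In particular, $I[\hat Z : \langle I, \hat I\rangle] \le H[\hat Z \mid Z] + H[\hat I \mid I]$. -/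

import Mathlib

open MeasureTheory

/-- Shannon entropy (natural logarithm) of a finite-valued random variable. -/
noncomputable def entropyRV {Ω : Type*} [MeasurableSpace Ω] (μ : Measure Ω)
    {S : Type*} [Fintype S] (X : Ω → S) : ℝ :=
  ∑ s : S, Real.negMulLog ((μ (X ⁻¹' {s})).toReal)

/-- Conditional entropy `H[X | Y] = H[⟨X,Y⟩] - H[Y]`. -/
noncomputable def condEntropyRV {Ω : Type*} [MeasurableSpace Ω] (μ : Measure Ω)
    {S T : Type*} [Fintype S] [Fintype T] (X : Ω → S) (Y : Ω → T) : ℝ :=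
  entropyRV μ (fun ω => (X ω, Y ω)) - entropyRV μ Y

/-- Mutual information `I[X : Y] = H[X] + H[Y] - H[⟨X,Y⟩]`. -/
noncomputable def mutualInfoRV {Ω : Type*} [MeasurableSpace Ω] (μ : Measure Ω)
    {S T : Type*} [Fintype S] [Fintype T] (X : Ω → S) (Y : Ω → T) : ℝ :=
  entropyRV μ X + entropyRV μ Y - entropyRV μ (fun ω => (X ω, Y ω))

/-- `x ↦ -x log x` is subadditive over finite sums of nonnegative reals. -/
theorem negMulLog_sum_le {S : Type*} (s : Finset S) (a : S → ℝ) (ha : ∀ i ∈ s, 0 ≤ a i) :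
    Real.negMulLog (∑ i ∈ s, a i) ≤ ∑ i ∈ s, Real.negMulLog (a i) := by
  simp only [Real.negMulLog, neg_mul, Finset.sum_neg_distrib, Finset.sum_mul]
  refine neg_le_neg (Finset.sum_le_sum fun i hi => ?_)
  rcases (ha i hi).eq_or_lt with h | h
  · simp [← h]
  · exact mul_le_mul_of_nonneg_left
      (Real.log_le_log h (Finset.single_le_sum ha hi)) h.le

/-- The entropy of a function of a random variable is at most the entropy of the variable. -/
theorem entropyRV_comp_le {Ω : Type*} [MeasurableSpace Ω] (μ : Measure Ω) [IsFiniteMeasure μ]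
    {S T : Type*} [Fintype S] [MeasurableSpace S] [MeasurableSingletonClass S] [Fintype T]
    {X : Ω → S} (hX : Measurable X) (f : S → T) :
    entropyRV μ (fun ω => f (X ω)) ≤ entropyRV μ X := by
  classical
  unfold entropyRV
  rw [← Finset.sum_fiberwise Finset.univ f]
  refine Finset.sum_le_sum fun t _ => ?_
  have h : (μ ((fun ω => f (X ω)) ⁻¹' {t})).toReal =
      ∑ s with f s = t, (μ (X ⁻¹' {s})).toReal := by
    have := sum_measureReal_preimage_singleton (μ := μ) (f := X)
      (Finset.univ.filter fun s => f s = t) (fun s _ => hX (measurableSet_singleton s))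
    simp only [measureReal_def] at this
    rw [this]
    congr 2
    ext ω
    simp
  rw [h]
  exact negMulLog_sum_le _ _ fun _ _ => ENNReal.toReal_nonneg

/-- The point masses of a random variable with finite range add up to one. -/
theorem sum_measure_preimage_singleton_toReal {Ω : Type*} [MeasurableSpace Ω] (μ : Measure Ω)
    [IsProbabilityMeasure μ] {S : Type*} [Fintype S] [MeasurableSpace S]
    [MeasurableSingletonClass S] {X : Ω → S} (hX : Measurable X) :
    ∑ s, (μ (X ⁻¹' {s})).toReal = 1 := by
  have := sum_measureReal_preimage_singleton (μ := μ) (f := X) Finset.univ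
    (fun s _ => hX (measurableSet_singleton s))
  simpa [measureReal_def] using this

/-- Entropy is additive over independent random variables. -/
theorem entropyRV_prod_of_indepFun {Ω : Type*} [MeasurableSpace Ω] (μ : Measure Ω)
    [IsProbabilityMeasure μ] {S T : Type*} [Fintype S] [MeasurableSpace S]
    [MeasurableSingletonClass S] [Fintype T] [MeasurableSpace T] [MeasurableSingletonClass T]
    {X : Ω → S} {Y : Ω → T} (hX : Measurable X) (hY : Measurable Y)
    (h : ProbabilityTheory.IndepFun X Y μ) :
    entropyRV μ (fun ω => (X ω, Y ω)) = entropyRV μ X + entropyRV μ Y := by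
  have hprod : ∀ s t, (μ ((fun ω => (X ω, Y ω)) ⁻¹' {(s, t)})).toReal =
      (μ (X ⁻¹' {s})).toReal * (μ (Y ⁻¹' {t})).toReal := by
    intro s t
    rw [← ENNReal.toReal_mul, ← h.measure_inter_preimage_eq_mul _ _
      (measurableSet_singleton s) (measurableSet_singleton t)]
    congr 2
    ext ω
    simp
  unfold entropyRV
  simp only [Fintype.sum_prod_type, hprod, Real.negMulLog_mul, Finset.sum_add_distrib,
    ← Finset.sum_mul, ← Finset.mul_sum, sum_measure_preimage_singleton_toReal μ hX,
    sum_measure_preimage_singleton_toReal μ hY, one_mul]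

/-- The chain `I[Ẑ : ⟨I, Î⟩] ≤ I[⟨Z, Ẑ⟩ : I] + H[Î | I] ≤ H[Ẑ | Z] + H[Î | I]`, where
`Ẑ = A ∘ I + Z - A ∘ Î` and the channel noise `Z` is independent of the transmitted index `I`.
The finite types `ι` and `G` carry the discrete σ-algebra. -/
theorem mutualInfo_recovered_noise_le
    {Ω : Type*} [MeasurableSpace Ω] (μ : Measure Ω) [IsProbabilityMeasure μ]
    {ι : Type*} [Fintype ι] [Nonempty ι] [MeasurableSpace ι] [MeasurableSingletonClass ι]
    {G : Type*} [Fintype G] [AddCommGroup G] [MeasurableSpace G] [MeasurableSingletonClass G]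
    (A : ι → G) (I Ihat : Ω → ι) (Z : Ω → G)
    (hI : Measurable I) (hIhat : Measurable Ihat) (hZ : Measurable Z)
    (hInd : ProbabilityTheory.IndepFun Z I μ)
    (Zhat : Ω → G) (hZhat : Zhat = fun ω => A (I ω) + Z ω - A (Ihat ω)) :
    mutualInfoRV μ Zhat (fun ω => (I ω, Ihat ω)) ≤
        mutualInfoRV μ (fun ω => (Z ω, Zhat ω)) I + condEntropyRV μ Ihat I ∧
      mutualInfoRV μ (fun ω => (Z ω, Zhat ω)) I + condEntropyRV μ Ihat I ≤
        condEntropyRV μ Zhat Z + condEntropyRV μ Ihat I := by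
  have hZhatm : Measurable Zhat := by
    have hφ : Measurable fun p : ι × G × ι => A p.1 + p.2.1 - A p.2.2 := measurable_of_finite _
    rw [hZhat]
    exact hφ.comp (hI.prodMk (hZ.prodMk hIhat))
  have hmarg : entropyRV μ Zhat ≤ entropyRV μ (fun ω => (Z ω, Zhat ω)) :=
    entropyRV_comp_le μ (hZ.prodMk hZhatm) Prod.snd
  have hdet : entropyRV μ (fun ω => ((Z ω, Zhat ω), I ω)) ≤
      entropyRV μ (fun ω => (Zhat ω, (I ω, Ihat ω))) := by
    have hle := entropyRV_comp_le μ (hZhatm.prodMk (hI.prodMk hIhat))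
      fun p : G × ι × ι => ((p.1 + A p.2.2 - A p.2.1, p.1), p.2.1)
    have hZeq : ∀ ω, Zhat ω + A (Ihat ω) - A (I ω) = Z ω := fun ω => by
      simp only [hZhat]
      abel
    simpa only [hZeq] using hle
  have hswap : entropyRV μ (fun ω => (I ω, Ihat ω)) ≤ entropyRV μ (fun ω => (Ihat ω, I ω)) :=
    entropyRV_comp_le μ (hIhat.prodMk hI) Prod.swap
  have hswapZ : entropyRV μ (fun ω => (Z ω, Zhat ω)) ≤ entropyRV μ (fun ω => (Zhat ω, Z ω)) :=
    entropyRV_comp_le μ (hZhatm.prodMk hZ) Prod.swap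
  have hpair : entropyRV μ (fun ω => (Z ω, I ω)) ≤
      entropyRV μ (fun ω => ((Z ω, Zhat ω), I ω)) :=
    entropyRV_comp_le μ ((hZ.prodMk hZhatm).prodMk hI)
      fun p : (G × G) × ι => (p.1.1, p.2)
  have hadd := entropyRV_prod_of_indepFun μ hZ hI hInd
  unfold mutualInfoRV condEntropyRV
  constructor <;> linarith
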